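/- For every integer p, the homological Deligne complex functor A ↦ 𝒟_*(A,p), from homological Dolbeault complexes to complexes of real vector spaces, is exact: it carries short exact sequences of homological Dolbeault complexes (exact in each bidegree) to short exact sequences of complexes. -/

import Mathlib

/-!
# Statement 4

For every integer `p`, the homological Deligne complex functor `A ↦ 𝒟_*(A,p)`, from
homological Dolbeault complexes to complexes of real vector spaces, is exact: it carries short
exact sequences of homological Dolbeault complexes (exact in each bidegree) to short exact
sequences of complexes.
-/

/-- A homological Dolbeault complex `A = (A_*^ℝ, d_A)`: a bounded-above graded complex of real
vector spaces with complexification `M n = A_n^ℂ` carrying a bigrading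
`A_n^ℂ = ⊕_{p+q=n} A_{p,q}` (recorded by the projections `proj n p` onto `A_{p,n-p}`), whose
differential decomposes as `d = ∂ + ∂̄` with `∂` of type `(−1,0)` and `∂̄` of type `(0,−1)`,
and whose real structure (complex conjugation `conj`) satisfies `conj(A_{p,q}) = A_{q,p}`. -/
structure HomologicalDolbeaultComplex where
  /-- the complexification `A_n^ℂ` of the degree `n` part -/
  M : ℤ → Type
  [instAdd : ∀ n, AddCommGroup (M n)]
  [instMod : ∀ n, Module ℂ (M n)]
  /-- `proj n p` is the projection of `A_n^ℂ` onto the bigraded piece `A_{p,n-p}` -/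
  proj : ∀ _ : ℤ, ℤ → ∀ n', M n' →ₗ[ℂ] M n'
  proj_idem : ∀ n p x, proj n p n (proj n p n x) = proj n p n x
  proj_orth : ∀ n p q x, p ≠ q → proj n p n (proj n q n x) = 0
  proj_finite : ∀ n (x : M n), (Function.support fun p => proj n p n x).Finite
  proj_sum : ∀ n (x : M n), (finsum fun p => proj n p n x) = x
  /-- the complex is bounded from above -/
  bddAbove : ∃ N : ℤ, ∀ n, N < n → ∀ x : M n, x = 0
  /-- the operator `∂`, of type `(−1,0)`; `del i j = 0` unless `j = i − 1` -/
  del : ∀ i j : ℤ, M i →ₗ[ℂ] M j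
  /-- the operator `∂̄`, of type `(0,−1)`; `delbar i j = 0` unless `j = i − 1` -/
  delbar : ∀ i j : ℤ, M i →ₗ[ℂ] M j
  del_degree : ∀ i j, j ≠ i - 1 → del i j = 0
  delbar_degree : ∀ i j, j ≠ i - 1 → delbar i j = 0
  del_type : ∀ i j p x, del i j (proj i p i x) = proj j (p-1) j (del i j x)
  delbar_type : ∀ i j p x, delbar i j (proj i p i x) = proj j p j (delbar i j x)
  /-- `d_A = ∂ + ∂̄` squares to zero -/
  dsq : ∀ i j k (x : M i),
    del j k (del i j x) + delbar j k (del i j x) +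
      del j k (delbar i j x) + delbar j k (delbar i j x) = 0
  /-- complex conjugation (the real structure), a real-linear involution -/
  conj : ∀ n, M n →ₗ[ℝ] M n
  conj_smul : ∀ n (c : ℂ) (x : M n), conj n (c • x) = (starRingEnd ℂ) c • conj n x
  conj_invol : ∀ n x, conj n (conj n x) = x
  /-- the symmetry property `conj (A_{p,q}) = A_{q,p}` -/
  conj_proj : ∀ n p (x : M n), conj n (proj n p n x) = proj n (n - p) n (conj n x)
  /-- conjugation interchanges `∂` and `∂̄` -/
  conj_del : ∀ i j (x : M i), conj j (del i j x) = delbar i j (conj i x)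

attribute [instance] HomologicalDolbeaultComplex.instAdd HomologicalDolbeaultComplex.instMod

namespace HomologicalDolbeaultComplex

variable (A : HomologicalDolbeaultComplex)

/-- the projection `F_{k,k'}` onto `F_k ∩ F̄_{k'}`, i.e. onto the pieces `A_{l,n-l}` with
`l ≤ k` and `n − l ≤ k'` -/
noncomputable def Fband (n k k' : ℤ) (x : A.M n) : A.M n :=
  finsum fun l => if l ≤ k ∧ n - l ≤ k' then A.proj n l n x else 0

/-- membership in the real twist `A_n^ℝ(r) = (2πi)^{-r} A_n^ℝ`, i.e. `x̄ = (−1)^r x` -/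
def IsReal (r n : ℤ) (x : A.M n) : Prop := A.conj n x = ((-1:ℝ) ^ r) • x

/-- membership in `F_{k,k'} A_n = F_k A_n ∩ F̄_{k'} A_n` -/
def InFband (n k k' : ℤ) (x : A.M n) : Prop := A.Fband n k k' x = x

/-- membership in the homological Deligne complex
`𝒟_n(A,p) = A_{n+1}^ℝ(p+1) ∩ F_{n-p,n-p} A_{n+1}^ℂ`, for the range `n ≥ 2p+1` -/
def MemDeligneHigh (p n : ℤ) (x : A.M (n+1)) : Prop :=
  A.IsReal (p+1) (n+1) x ∧ A.InFband (n+1) (n-p) (n-p) x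

/-- membership in the homological Deligne complex
`𝒟_n(A,p) = A_n^ℝ(p) ∩ F_{p,p} A_n^ℂ`, for the range `n ≤ 2p` -/
def MemDeligneLow (p n : ℤ) (x : A.M n) : Prop :=
  A.IsReal p n x ∧ A.InFband n p p x

end HomologicalDolbeaultComplex

/-- A morphism of homological Dolbeault complexes: a degreewise `ℂ`-linear map compatible with
the bigrading, with `∂`, `∂̄` and with the real structures. -/
structure DolbeaultHom (A B : HomologicalDolbeaultComplex) where
  map : ∀ n, A.M n →ₗ[ℂ] B.M n
  map_proj : ∀ n p x, map n (A.proj n p n x) = B.proj n p n (map n x)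
  map_del : ∀ i j x, map j (A.del i j x) = B.del i j (map i x)
  map_delbar : ∀ i j x, map j (A.delbar i j x) = B.delbar i j (map i x)
  map_conj : ∀ n x, map n (A.conj n x) = B.conj n (map n x)

open HomologicalDolbeaultComplex

/-!
Both pieces of the Deligne complex have the form `A_n^ℝ(r) ∩ F_{k,k} A_n^ℂ`. Twisted conjugation
`x ↦ (-1)^r x̄` is an involution preserving `F_{k,k}`, so averaging over it after applying `F_{k,k}`
is an idempotent additive map with exactly this image, natural in `A`. Hence a preimage of an
element of `A_n^ℝ(r) ∩ F_{k,k} A_n^ℂ`, found bidegree by bidegree, can be moved back into this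
subspace by applying the idempotent.
-/

theorem neg_one_zpow_mul_self {K : Type*} [DivisionRing K] (r : ℤ) :
    (-1 : K) ^ r * (-1 : K) ^ r = 1 := by
  rw [← (Commute.refl (-1 : K)).mul_zpow, neg_one_mul, neg_neg, one_zpow]

namespace HomologicalDolbeaultComplex

variable {A : HomologicalDolbeaultComplex} {r n k k' : ℤ} {x y : A.M n}

theorem ext_proj (h : ∀ l, A.proj n l n x = A.proj n l n y) : x = y := by
  rw [← A.proj_sum n x, ← A.proj_sum n y]
  exact finsum_congr h

theorem mem_of_forall_proj_mem {S : Type*} [SetLike S (A.M n)] [AddSubmonoidClass S (A.M n)]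
    {s : S} (h : ∀ l, A.proj n l n x ∈ s) : x ∈ s := by
  rw [← A.proj_sum n x]
  exact finsum_induction (· ∈ s) (zero_mem s) (fun _ _ => add_mem) h

theorem proj_proj (p q : ℤ) (x : A.M n) :
    A.proj n p n (A.proj n q n x) = if q = p then A.proj n p n x else 0 := by
  split_ifs with h
  · rw [h, A.proj_idem]
  · exact A.proj_orth n p q x (Ne.symm h)

theorem proj_conj (l : ℤ) (x : A.M n) :
    A.proj n l n (A.conj n x) = A.conj n (A.proj n (n - l) n x) := by
  rw [A.conj_proj, sub_sub_cancel]

theorem proj_Fband (k k' l : ℤ) (x : A.M n) :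
    A.proj n l n (A.Fband n k k' x) = if l ≤ k ∧ n - l ≤ k' then A.proj n l n x else 0 := by
  have finite_support :
      (Function.support fun m => if m ≤ k ∧ n - m ≤ k' then A.proj n m n x else 0).Finite :=
    (A.proj_finite n x).subset fun m hm h => hm (by simp only [h, ite_self])
  calc A.proj n l n (A.Fband n k k' x)
      = ∑ᶠ m, A.proj n l n (if m ≤ k ∧ n - m ≤ k' then A.proj n m n x else 0) :=
        (A.proj n l n).toAddMonoidHom.map_finsum finite_support
    _ = A.proj n l n (if l ≤ k ∧ n - l ≤ k' then A.proj n l n x else 0) :=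
        finsum_eq_single _ l fun m hm => by
          rw [apply_ite (A.proj n l n), proj_proj, if_neg hm, map_zero, ite_self]
    _ = if l ≤ k ∧ n - l ≤ k' then A.proj n l n x else 0 := by
        rw [apply_ite (A.proj n l n), A.proj_idem, map_zero]

theorem inFband_iff_proj_eq_zero :
    A.InFband n k k' x ↔ ∀ l, ¬(l ≤ k ∧ n - l ≤ k') → A.proj n l n x = 0 := by
  constructor
  · intro h l hl
    rw [← show A.Fband n k k' x = x from h, proj_Fband, if_neg hl]
  · intro h
    refine ext_proj fun l => ?_
    rw [proj_Fband]
    split_ifs with hl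
    · rfl
    · exact (h l hl).symm

theorem inFband_Fband (k k' : ℤ) (x : A.M n) : A.InFband n k k' (A.Fband n k k' x) :=
  inFband_iff_proj_eq_zero.2 fun l hl => by rw [proj_Fband, if_neg hl]

theorem InFband.add (hx : A.InFband n k k' x) (hy : A.InFband n k k' y) :
    A.InFband n k k' (x + y) := by
  rw [inFband_iff_proj_eq_zero] at *
  intro l hl
  rw [map_add, hx l hl, hy l hl, add_zero]

theorem InFband.smul (c : ℝ) (hx : A.InFband n k k' x) : A.InFband n k k' (c • x) := by
  rw [inFband_iff_proj_eq_zero] at *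
  intro l hl
  rw [LinearMap.map_smul_of_tower, hx l hl, smul_zero]

theorem InFband.conj (hx : A.InFband n k k' x) : A.InFband n k' k (A.conj n x) := by
  rw [inFband_iff_proj_eq_zero] at *
  intro l hl
  rw [proj_conj, hx (n - l) (by rwa [sub_sub_cancel, and_comm]), map_zero]

/-- The projection of `A_n^ℂ` onto the real twist `A_n^ℝ(r)`, obtained by averaging over the
involution `x ↦ (-1)^r x̄`. -/
noncomputable def twistedRealPart (A : HomologicalDolbeaultComplex) (r n : ℤ) (x : A.M n) : A.M n :=
  (2⁻¹ : ℝ) • (x + (-1 : ℝ) ^ r • A.conj n x)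

theorem smul_conj_smul_conj (r : ℤ) (x : A.M n) :
    (-1 : ℝ) ^ r • A.conj n ((-1 : ℝ) ^ r • A.conj n x) = x := by
  rw [map_smul, A.conj_invol, smul_smul, neg_one_zpow_mul_self, one_smul]

theorem isReal_iff_smul_conj_eq : A.IsReal r n x ↔ (-1 : ℝ) ^ r • A.conj n x = x := by
  rw [IsReal]
  constructor <;> intro h
  · rw [h, smul_smul, neg_one_zpow_mul_self, one_smul]
  · rw [← h, smul_smul, neg_one_zpow_mul_self, one_smul, h]

theorem isReal_twistedRealPart (r : ℤ) (x : A.M n) : A.IsReal r n (A.twistedRealPart r n x) := by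
  rw [isReal_iff_smul_conj_eq, twistedRealPart, map_smul, map_add, smul_comm, smul_add,
    smul_conj_smul_conj, add_comm]

theorem IsReal.twistedRealPart_eq (hx : A.IsReal r n x) : A.twistedRealPart r n x = x := by
  rw [twistedRealPart, isReal_iff_smul_conj_eq.1 hx, ← two_smul ℝ x,
    inv_smul_smul₀ (two_ne_zero' ℝ)]

theorem InFband.twistedRealPart (hx : A.InFband n k k x) :
    A.InFband n k k (A.twistedRealPart r n x) :=
  (hx.add (hx.conj.smul _)).smul _

/-- Membership in `A_n^ℝ(r) ∩ F_{k,k} A_n^ℂ`. Both ranges of the Deligne complex are of this form: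
`MemDeligneHigh p n` has `(r, n, k) = (p + 1, n + 1, n - p)` and `MemDeligneLow p n` has
`(r, n, k) = (p, n, p)`. -/
def MemRealFband (A : HomologicalDolbeaultComplex) (r n k : ℤ) (x : A.M n) : Prop :=
  A.IsReal r n x ∧ A.InFband n k k x

/-- The projection of `A_n^ℂ` onto `A_n^ℝ(r) ∩ F_{k,k} A_n^ℂ`. -/
noncomputable def realFband (A : HomologicalDolbeaultComplex) (r n k : ℤ) (x : A.M n) : A.M n :=
  A.twistedRealPart r n (A.Fband n k k x)

theorem memRealFband_realFband (r k : ℤ) (x : A.M n) :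
    A.MemRealFband r n k (A.realFband r n k x) :=
  ⟨isReal_twistedRealPart r _, (inFband_Fband k k x).twistedRealPart⟩

theorem MemRealFband.realFband_eq (hx : A.MemRealFband r n k x) : A.realFband r n k x = x := by
  rw [realFband, show A.Fband n k k x = x from hx.2, hx.1.twistedRealPart_eq]

end HomologicalDolbeaultComplex

namespace DolbeaultHom

variable {A B : HomologicalDolbeaultComplex} {r n k : ℤ} (f : DolbeaultHom A B)

theorem map_Fband (k k' : ℤ) (x : A.M n) :
    f.map n (A.Fband n k k' x) = B.Fband n k k' (f.map n x) :=
  ext_proj fun l => by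
    rw [← f.map_proj, proj_Fband, proj_Fband, apply_ite (f.map n), f.map_proj, map_zero]

theorem map_twistedRealPart (r : ℤ) (x : A.M n) :
    f.map n (A.twistedRealPart r n x) = B.twistedRealPart r n (f.map n x) := by
  simp only [twistedRealPart, LinearMap.map_smul_of_tower, map_add, f.map_conj]

theorem map_realFband (r k : ℤ) (x : A.M n) :
    f.map n (A.realFband r n k x) = B.realFband r n k (f.map n x) := by
  rw [realFband, map_twistedRealPart, map_Fband, realFband]

theorem memRealFband_map {x : A.M n} (hx : A.MemRealFband r n k x) :
    B.MemRealFband r n k (f.map n x) := by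
  rw [← hx.realFband_eq, map_realFband]
  exact memRealFband_realFband r k _

theorem exists_memRealFband_map_eq {y : B.M n} (hy : B.MemRealFband r n k y)
    (hrange : y ∈ LinearMap.range (f.map n)) : ∃ x, A.MemRealFband r n k x ∧ f.map n x = y := by
  obtain ⟨x, rfl⟩ := hrange
  exact ⟨A.realFband r n k x, memRealFband_realFband r k x, by rw [map_realFband, hy.realFband_eq]⟩

theorem eq_zero_of_map_eq_zero
    (hinj : ∀ q (x : A.M n), A.proj n q n x = x → f.map n x = 0 → x = 0)
    {x : A.M n} (hx : f.map n x = 0) : x = 0 :=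
  ext_proj fun q => by
    rw [map_zero]
    exact hinj q _ (A.proj_idem n q x) (by rw [f.map_proj, hx, map_zero])

end DolbeaultHom

theorem deligne_functor_exact_general {A B C : HomologicalDolbeaultComplex}
    (f : DolbeaultHom A B) (g : DolbeaultHom B C) {n : ℤ}
    (hinj : ∀ q (x : A.M n), A.proj n q n x = x → f.map n x = 0 → x = 0)
    (hsurj : ∀ q (z : C.M n), C.proj n q n z = z →
      ∃ y : B.M n, B.proj n q n y = y ∧ g.map n y = z)
    (hexact : ∀ q (y : B.M n), B.proj n q n y = y → g.map n y = 0 →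
      ∃ x : A.M n, A.proj n q n x = x ∧ f.map n x = y) (r k : ℤ) :
    (∀ x : A.M n, A.MemRealFband r n k x → f.map n x = 0 → x = 0) ∧
    (∀ x : A.M n, A.MemRealFband r n k x → B.MemRealFband r n k (f.map n x)) ∧
    (∀ y : B.M n, B.MemRealFband r n k y → C.MemRealFband r n k (g.map n y)) ∧
    (∀ z : C.M n, C.MemRealFband r n k z →
      ∃ y : B.M n, B.MemRealFband r n k y ∧ g.map n y = z) ∧
    (∀ y : B.M n, B.MemRealFband r n k y → g.map n y = 0 →
      ∃ x : A.M n, A.MemRealFband r n k x ∧ f.map n x = y) := by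
  refine ⟨fun x _ => f.eq_zero_of_map_eq_zero hinj, fun x => f.memRealFband_map,
    fun y => g.memRealFband_map, fun z hz => ?_, fun y hy hgy => ?_⟩
  · refine g.exists_memRealFband_map_eq hz (mem_of_forall_proj_mem fun q => ?_)
    obtain ⟨y, -, hy⟩ := hsurj q _ (C.proj_idem n q z)
    exact ⟨y, hy⟩
  · refine f.exists_memRealFband_map_eq hy (mem_of_forall_proj_mem fun q => ?_)
    have hg_proj : g.map n (B.proj n q n y) = 0 := by rw [g.map_proj, hgy, map_zero]
    obtain ⟨x, -, hx⟩ := hexact q _ (B.proj_idem n q y) hg_proj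
    exact ⟨x, hx⟩

/-- exactness of the homological Deligne complex functor.  Let
`0 → A → B → C → 0` be a short exact sequence of homological Dolbeault complexes, exact in
each bidegree (injectivity, surjectivity and exactness hold on each bigraded piece
`A_{p,n-p}`, the elements fixed by `proj n p`).  Then for every `p ∈ ℤ` the induced sequence
of homological Deligne complexes `0 → 𝒟_*(A,p) → 𝒟_*(B,p) → 𝒟_*(C,p) → 0` is a short exact
sequence of complexes of real vector spaces: in each degree `n` (in either range `n ≥ 2p+1`
or `n ≤ 2p`) the induced maps on `𝒟_n(−,p)` are injective resp. surjective and exact. -/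
theorem deligne_functor_exact
    (A B C : HomologicalDolbeaultComplex)
    (f : DolbeaultHom A B) (g : DolbeaultHom B C)
    -- exactness in each bidegree
    (hinj : ∀ n q (x : A.M n), A.proj n q n x = x → f.map n x = 0 → x = 0)
    (hsurj : ∀ n q (z : C.M n), C.proj n q n z = z →
      ∃ y : B.M n, B.proj n q n y = y ∧ g.map n y = z)
    (hexact : ∀ n q (y : B.M n), B.proj n q n y = y → g.map n y = 0 →
      ∃ x : A.M n, A.proj n q n x = x ∧ f.map n x = y) :
    ∀ p n : ℤ,
      -- the range `n ≥ 2p+1`, where `𝒟_n(−,p) ⊆ (−)_{n+1}^ℂ`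
      (2*p+1 ≤ n →
        (∀ x : A.M (n+1), A.MemDeligneHigh p n x → f.map (n+1) x = 0 → x = 0) ∧
        (∀ x : A.M (n+1), A.MemDeligneHigh p n x → B.MemDeligneHigh p n (f.map (n+1) x)) ∧
        (∀ y : B.M (n+1), B.MemDeligneHigh p n y → C.MemDeligneHigh p n (g.map (n+1) y)) ∧
        (∀ z : C.M (n+1), C.MemDeligneHigh p n z →
          ∃ y : B.M (n+1), B.MemDeligneHigh p n y ∧ g.map (n+1) y = z) ∧
        (∀ y : B.M (n+1), B.MemDeligneHigh p n y → g.map (n+1) y = 0 →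
          ∃ x : A.M (n+1), A.MemDeligneHigh p n x ∧ f.map (n+1) x = y)) ∧
      -- the range `n ≤ 2p`, where `𝒟_n(−,p) ⊆ (−)_n^ℂ`
      (n ≤ 2*p →
        (∀ x : A.M n, A.MemDeligneLow p n x → f.map n x = 0 → x = 0) ∧
        (∀ x : A.M n, A.MemDeligneLow p n x → B.MemDeligneLow p n (f.map n x)) ∧
        (∀ y : B.M n, B.MemDeligneLow p n y → C.MemDeligneLow p n (g.map n y)) ∧
        (∀ z : C.M n, C.MemDeligneLow p n z →
          ∃ y : B.M n, B.MemDeligneLow p n y ∧ g.map n y = z) ∧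
        (∀ y : B.M n, B.MemDeligneLow p n y → g.map n y = 0 →
          ∃ x : A.M n, A.MemDeligneLow p n x ∧ f.map n x = y)) := by
  intro p n
  exact ⟨fun _ => deligne_functor_exact_general f g (hinj _) (hsurj _) (hexact _) (p + 1) (n - p),
    fun _ => deligne_functor_exact_general f g (hinj _) (hsurj _) (hexact _) p p⟩
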